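/- Let p, q ∈ ℂ and μ ∈ ℂ with Re μ > 0, and assume θ[p,q](iν) ≠ 0 for every ν with Re ν > 0. Then: w₃[p,q](i/μ) = −μ² w₁[−q,p](iμ); w₃'[p,q](i/μ) = μ⁴ w₁'[−q,p](iμ) + 2μ³ w₁[−q,p](iμ); w₃''[p,q](i/μ) = −μ⁶ w₁''[−q,p](iμ) − 6μ⁵ w₁'[−q,p](iμ) − 6μ⁴ w₁[−q,p](iμ); w₃⁽³⁾[p,q](i/μ) = μ⁸ w₁⁽³⁾[−q,p](iμ) + 12μ⁷ w₁''[−q,p](iμ) + 36μ⁶ w₁'[−q,p](iμ) + 24μ⁵ w₁[−q,p](iμ); w₃⁽⁴⁾[p,q](i/μ) = −μ¹⁰ w₁⁽⁴⁾[−q,p](iμ) − 20μ⁹ w₁⁽³⁾[−q,p](iμ) − 120μ⁸ w₁''[−q,p](iμ) − 240μ⁷ w₁'[−q,p](iμ) − 120μ⁶ w₁[−q,p](iμ). -/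

import Mathlib

noncomputable section

/-- The theta function with characteristics `θ[p,q](iμ)`. -/
def theta (p q μ : ℂ) : ℂ :=
  ∑' m : ℤ, Complex.exp (-(Real.pi : ℂ) * ((m : ℂ) + p) ^ 2 * μ +
    2 * (Real.pi : ℂ) * Complex.I * ((m : ℂ) + p) * q)

/-- The characteristic derivative `∂qθ[p,q](iμ)`. -/
def thetaQ (p q μ : ℂ) : ℂ :=
  2 * (Real.pi : ℂ) * Complex.I *
    ∑' m : ℤ, ((m : ℂ) + p) * Complex.exp (-(Real.pi : ℂ) * ((m : ℂ) + p) ^ 2 * μ +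
      2 * (Real.pi : ℂ) * Complex.I * ((m : ℂ) + p) * q)

/-- The n-th μ-derivative `∂μⁿθ[p,q](iμ)`, given by its absolutely convergent series. -/
def thetaD (n : ℕ) (p q μ : ℂ) : ℂ :=
  (-(Real.pi : ℂ)) ^ n *
    ∑' m : ℤ, ((m : ℂ) + p) ^ (2 * n) *
      Complex.exp (-(Real.pi : ℂ) * ((m : ℂ) + p) ^ 2 * μ +
        2 * (Real.pi : ℂ) * Complex.I * ((m : ℂ) + p) * q)

/-- The n-th μ-derivative `∂μⁿ∂qθ[p,q](iμ)`, given by its absolutely convergent series. -/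
def thetaQD (n : ℕ) (p q μ : ℂ) : ℂ :=
  2 * Complex.I * (-1 : ℂ) ^ n * (Real.pi : ℂ) ^ (n + 1) *
    ∑' m : ℤ, ((m : ℂ) + p) ^ (2 * n + 1) *
      Complex.exp (-(Real.pi : ℂ) * ((m : ℂ) + p) ^ 2 * μ +
        2 * (Real.pi : ℂ) * Complex.I * ((m : ℂ) + p) * q)

/-- The constant `C(j|n) = (−i)ⁿ n! / (2ʲ (n−2j)! (2j)!!)` with `(2j)!! = 2ʲ j!`. -/
def Ccoef (j n : ℕ) : ℂ :=
  (-Complex.I) ^ n * (n.factorial : ℂ) /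
    ((2 : ℂ) ^ j * ((n - 2 * j).factorial : ℂ) * ((2 : ℂ) ^ j * (j.factorial : ℂ)))

/-- `w₁[p,q](iμ)` of the two-parametric family. -/
def w1 (p q μ : ℂ) : ℂ :=
  -(Complex.I / 2) * theta 0 0 μ * theta 0 (1 / 2) μ * thetaQ p (q + 1 / 2) μ /
    (Complex.exp ((Real.pi : ℂ) * Complex.I * p) * theta p q μ)

/-- `w₂[p,q](iμ)` of the two-parametric family. -/
def w2 (p q μ : ℂ) : ℂ :=
  (Complex.I / 2) * theta (1 / 2) 0 μ * theta 0 (1 / 2) μ *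
    thetaQ (p + 1 / 2) (q + 1 / 2) μ /
    (Complex.exp ((Real.pi : ℂ) * Complex.I * p) * theta p q μ)

/-- `w₃[p,q](iμ)` of the two-parametric family. -/
def w3 (p q μ : ℂ) : ℂ :=
  -(1 / 2 : ℂ) * theta (1 / 2) 0 μ * theta 0 0 μ * thetaQ (p + 1 / 2) q μ / theta p q μ

/-- The conformal factor `F[p,q](iμ)` of the two-parametric family. -/
def Ftwo (Λ p q μ : ℂ) : ℂ :=
  (2 / ((Real.pi : ℂ) * Λ)) * (theta p q μ / thetaQ p q μ) ^ 2

/-- `w₁[q₀](iμ)` of the one-parametric family. -/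
def v1 (q0 μ : ℂ) : ℂ := 1 / (μ + q0) + 2 * thetaD 1 (1 / 2) 0 μ / theta (1 / 2) 0 μ

/-- `w₂[q₀](iμ)` of the one-parametric family. -/
def v2 (q0 μ : ℂ) : ℂ := 1 / (μ + q0) + 2 * thetaD 1 0 0 μ / theta 0 0 μ

/-- `w₃[q₀](iμ)` of the one-parametric family. -/
def v3 (q0 μ : ℂ) : ℂ := 1 / (μ + q0) + 2 * thetaD 1 0 (1 / 2) μ / theta 0 (1 / 2) μ

/-- The conformal factor `F[q₀](iμ) = C(μ+q₀)²` of the one-parametric family. -/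
def Fone (C q0 μ : ℂ) : ℂ := C * (μ + q0) ^ 2

/-- The Seeley–de Witt coefficient `ã₀[p,q](iμ)` of the two-parametric family. -/
def a0two (Λ p q μ : ℂ) : ℂ :=
  4 * Ftwo Λ p q μ ^ 2 * w1 p q μ * w2 p q μ * w3 p q μ

/-- The Seeley–de Witt coefficient `ã₀[q₀](iμ)` of the one-parametric family. -/
def a0one (C q0 μ : ℂ) : ℂ :=
  4 * Fone C q0 μ ^ 2 * v1 q0 μ * v2 q0 μ * v3 q0 μ

/-- The Seeley–de Witt coefficient `ã₂[p,q](iμ)` of the two-parametric family. -/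
def a2two (Λ p q μ : ℂ) : ℂ :=
  -(Ftwo Λ p q μ / 3) * (w1 p q μ ^ 2 + w2 p q μ ^ 2 + w3 p q μ ^ 2) +
  (Ftwo Λ p q μ / 6) *
    ((w1 p q μ ^ 2 * w2 p q μ ^ 2 - deriv (w3 p q) μ ^ 2) / w3 p q μ ^ 2 +
     (w1 p q μ ^ 2 * w3 p q μ ^ 2 - deriv (w2 p q) μ ^ 2) / w2 p q μ ^ 2 +
     (w2 p q μ ^ 2 * w3 p q μ ^ 2 - deriv (w1 p q) μ ^ 2) / w1 p q μ ^ 2) -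
  (Ftwo Λ p q μ / 3) *
    (deriv (w1 p q) μ * deriv (w2 p q) μ / (w1 p q μ * w2 p q μ) +
     deriv (w1 p q) μ * deriv (w3 p q) μ / (w1 p q μ * w3 p q μ) +
     deriv (w2 p q) μ * deriv (w3 p q) μ / (w2 p q μ * w3 p q μ)) +
  (Ftwo Λ p q μ / 3) *
    (iteratedDeriv 2 (w1 p q) μ / w1 p q μ + iteratedDeriv 2 (w2 p q) μ / w2 p q μ +
     iteratedDeriv 2 (w3 p q) μ / w3 p q μ) -
  deriv (Ftwo Λ p q) μ ^ 2 / (2 * Ftwo Λ p q μ) + iteratedDeriv 2 (Ftwo Λ p q) μ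

/-!
Jacobi's functional equations for the two-variable theta function and its `z`-derivative turn
`θ[p,q](i/μ)` and `∂qθ[p,q](i/μ)` into `θ[-q,p](iμ)` and `∂qθ[-q,p](iμ)`, up to the factors
`μ^{1/2} e^{2πipq}` and `-iμ^{3/2} e^{2πipq}`. In the quotient defining `w₃` the exponentials cancel
down to the factor `e^{πiq}` built into `w₁`, which leaves `w₃[p,q](i/μ) = -μ² w₁[-q,p](iμ)`.

Read at `x = 1/μ`, this says that `w₃[p,q]` is `-x⁻² g(1/x)` with `g = w₁[-q,p]`. For any `g` and
any integer `k`, the `n`-th derivative of `x^{-k} g(1/x)` is `(-1)ⁿ` times a combination of the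
`x^{-(k+2i+j)} g⁽ⁱ⁾(1/x)`, `i + j = n`, whose coefficients satisfy a Pascal-type recurrence solved
by `C(n,i) (k+i)(k+i+1)⋯(k+n-1)`.
-/

section IteratedDerivOfInversion

open Finset Topology

variable {R : Type*} [CommRing R]

/-- The coefficient `C(i+j, i) (k+i)(k+i+1)⋯(k+i+j-1)` with which `x^{-(k+2i+j)} g⁽ⁱ⁾(1/x)` enters
`(-1)^{i+j}` times the `(i+j)`-th derivative of `x ↦ x^{-k} g(1/x)`. -/
def inversionCoeff (k : R) (i j : ℕ) : R :=
  (i + j).choose i * (ascPochhammer R j).eval (k + i)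

lemma inversionCoeff_zero_right (k : R) (i : ℕ) : inversionCoeff k i 0 = 1 := by
  simp [inversionCoeff]

lemma inversionCoeff_zero_left_succ (k : R) (j : ℕ) :
    inversionCoeff k 0 (j + 1) = (k + j) * inversionCoeff k 0 j := by
  simp [inversionCoeff, ascPochhammer_succ_eval, mul_comm]

lemma inversionCoeff_succ_succ (k : R) (i j : ℕ) :
    inversionCoeff k (i + 1) (j + 1) =
      (k + 2 * (i + 1 : ℕ) + j) * inversionCoeff k (i + 1) j + inversionCoeff k i (j + 1) := by
  have ascPochhammer_shift : (ascPochhammer R (j + 1)).eval (k + i) =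
      (k + i) * (ascPochhammer R j).eval (k + (i + 1 : ℕ)) := by
    simp [ascPochhammer_succ_left, add_assoc]
  have choose_mul : ((i + j + 1).choose (i + 1) * (i + 1 : ℕ) : R) =
      (i + j + 1).choose i * (j + 1 : ℕ) := by
    have := Nat.choose_succ_right_eq (i + j + 1) i
    rw [show i + j + 1 - i = j + 1 by omega] at this
    exact_mod_cast congrArg (Nat.cast (R := R)) this
  simp only [inversionCoeff, ascPochhammer_shift, ascPochhammer_succ_eval,
    show i + 1 + (j + 1) = i + j + 1 + 1 by ring, show i + 1 + j = i + j + 1 by ring,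
    show i + (j + 1) = i + j + 1 by ring, Nat.choose_succ_succ' (i + j + 1) i]
  push_cast at choose_mul ⊢
  linear_combination (-(ascPochhammer R j).eval (k + (i + 1))) * choose_mul

lemma sum_antidiagonal_succ_inversionCoeff_smul {M : Type*} [AddCommGroup M] [Module R M] (k : R)
    (v : ℕ → ℕ → M) (n : ℕ) :
    ∑ ij ∈ antidiagonal (n + 1), inversionCoeff k ij.1 ij.2 • v ij.1 ij.2 =
      ∑ ij ∈ antidiagonal n, inversionCoeff k ij.1 ij.2 •
        ((k + 2 * ij.1 + ij.2) • v ij.1 (ij.2 + 1) + v (ij.1 + 1) ij.2) := by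
  simp only [smul_add, sum_add_distrib, smul_smul, mul_comm (inversionCoeff k _ _)]
  cases n with
  | zero => simp [inversionCoeff, Nat.antidiagonal_succ]
  | succ m =>
    rw [Nat.sum_antidiagonal_succ, Nat.sum_antidiagonal_succ' (n := m),
      Nat.sum_antidiagonal_succ (n := m), Nat.sum_antidiagonal_succ' (n := m)]
    simp only [inversionCoeff_succ_succ, inversionCoeff_zero_right, inversionCoeff_zero_left_succ,
      add_smul, sum_add_distrib, Nat.cast_zero, mul_zero, add_zero]
    abel

variable {𝕜 F : Type*} [NontriviallyNormedField 𝕜] [NormedAddCommGroup F] [NormedSpace 𝕜 F]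

lemma hasDerivAt_zpow_neg_smul_comp_inv {h : 𝕜 → F} {h' : F} {x : 𝕜} (m : ℤ) (hx : x ≠ 0)
    (hh : HasDerivAt h h' x⁻¹) :
    HasDerivAt (fun y ↦ y ^ (-m) • h y⁻¹)
      (-((m : 𝕜) • x ^ (-(m + 1)) • h x⁻¹ + x ^ (-(m + 2)) • h')) x := by
  have hasDerivAt_comp_inv : HasDerivAt (fun y ↦ h y⁻¹) (-(x ^ 2)⁻¹ • h') x :=
    hh.scomp x (hasDerivAt_inv hx)
  refine ((hasDerivAt_zpow (-m) x (.inl hx)).smul hasDerivAt_comp_inv).congr_deriv ?_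
  have zpow_split : x ^ (-(m + 2)) = x ^ (-m) * (x ^ 2)⁻¹ := by
    rw [neg_add, zpow_add₀ hx, zpow_neg x 2, zpow_ofNat]
  rw [zpow_split, show -(m + 1) = -m - 1 by ring, Int.cast_neg]
  module

lemma hasDerivAt_iteratedDeriv_of_contDiffAt {g : 𝕜 → F} {x : 𝕜} {n : WithTop ℕ∞} {i : ℕ}
    (hg : ContDiffAt 𝕜 n g x) (hi : i < n) :
    HasDerivAt (iteratedDeriv i g) (iteratedDeriv (i + 1) g x) x := by
  rw [iteratedDeriv_succ]
  refine DifferentiableAt.hasDerivAt ?_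
  rw [← contDiffWithinAt_univ] at hg
  simpa only [iteratedDerivWithin_univ, differentiableWithinAt_univ] using
    hg.differentiableWithinAt_iteratedDerivWithin hi (by simp)

theorem iteratedDeriv_zpow_neg_smul_comp_inv (k : ℤ) {g : 𝕜 → F} {x : 𝕜} (hx : x ≠ 0) {n : ℕ}
    (hg : ContDiffAt 𝕜 n g x⁻¹) :
    iteratedDeriv n (fun y ↦ y ^ (-k) • g y⁻¹) x =
      (-1 : 𝕜) ^ n • ∑ ij ∈ antidiagonal n, inversionCoeff (k : 𝕜) ij.1 ij.2 •
        x ^ (-(k + 2 * ij.1 + ij.2)) • iteratedDeriv ij.1 g x⁻¹ := by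
  induction n generalizing x with
  | zero => simp [inversionCoeff]
  | succ n ih =>
    have formula_near : iteratedDeriv n (fun y ↦ y ^ (-k) • g y⁻¹) =ᶠ[𝓝 x] fun y ↦
        (-1 : 𝕜) ^ n • ∑ ij ∈ antidiagonal n, inversionCoeff (k : 𝕜) ij.1 ij.2 •
          y ^ (-(k + 2 * ij.1 + ij.2)) • iteratedDeriv ij.1 g y⁻¹ := by
      filter_upwards [eventually_ne_nhds hx,
        (continuousAt_inv₀ hx).eventually (hg.eventually (by simp))] with y hy hgy
      exact ih hy (hgy.of_le (mod_cast n.le_succ))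
    have hasDerivAt_term (ij : ℕ × ℕ) (hij : ij ∈ antidiagonal n) :=
      (hasDerivAt_zpow_neg_smul_comp_inv (k + 2 * ij.1 + ij.2) hx
        (hasDerivAt_iteratedDeriv_of_contDiffAt hg
          (mod_cast Nat.antidiagonal.fst_lt hij))).fun_const_smul
        (inversionCoeff (k : 𝕜) ij.1 ij.2)
    rw [iteratedDeriv_succ, formula_near.deriv_eq,
      ((HasDerivAt.fun_sum hasDerivAt_term).fun_const_smul ((-1 : 𝕜) ^ n)).deriv,
      sum_antidiagonal_succ_inversionCoeff_smul (k : 𝕜)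
        (fun i j ↦ x ^ (-(k + 2 * i + j)) • iteratedDeriv i g x⁻¹),
      pow_succ, mul_neg_one, neg_smul, ← smul_neg, ← sum_neg_distrib]
    congr 1
    refine sum_congr rfl fun ij _ ↦ ?_
    rw [smul_neg]
    push_cast
    ring_nf

end IteratedDerivOfInversion

section ThetaInversion

open Complex

lemma re_inv_pos {μ : ℂ} (hμ : 0 < μ.re) : 0 < (μ⁻¹).re := by
  rw [inv_re]
  exact div_pos hμ (normSq_pos.mpr (ne_zero_of_re_pos hμ))

/-- The exponential factor by which the series `θ[p,q](iμ)` differs from Mathlib's two-variable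
theta function, evaluated at `z = q + ipμ` and `τ = iμ`. -/
def jacobiFactor (p q μ : ℂ) : ℂ :=
  cexp (-Real.pi * p ^ 2 * μ + 2 * Real.pi * I * p * q)

lemma cexp_eq_jacobiFactor_mul_jacobiTheta₂_term (p q μ : ℂ) (m : ℤ) :
    cexp (-Real.pi * (m + p) ^ 2 * μ + 2 * Real.pi * I * (m + p) * q) =
      jacobiFactor p q μ * jacobiTheta₂_term m (q + I * p * μ) (I * μ) := by
  rw [jacobiFactor, jacobiTheta₂_term, ← Complex.exp_add]
  congr 1
  linear_combination (-2 * Real.pi * m * p * μ - Real.pi * m ^ 2 * μ) * I_sq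

lemma theta_eq_jacobiTheta₂ (p q μ : ℂ) :
    theta p q μ = jacobiFactor p q μ * jacobiTheta₂ (q + I * p * μ) (I * μ) := by
  simp only [theta, cexp_eq_jacobiFactor_mul_jacobiTheta₂_term, tsum_mul_left, jacobiTheta₂]

lemma thetaQ_eq_jacobiTheta₂' (p q : ℂ) {μ : ℂ} (hμ : 0 < μ.re) :
    thetaQ p q μ = jacobiFactor p q μ * (jacobiTheta₂' (q + I * p * μ) (I * μ) +
      2 * Real.pi * I * p * jacobiTheta₂ (q + I * p * μ) (I * μ)) := by
  have hτ : 0 < (I * μ).im := by simpa using hμ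
  have hsum := ((hasSum_jacobiTheta₂'_term (q + I * p * μ) hτ).add
    ((hasSum_jacobiTheta₂_term (q + I * p * μ) hτ).mul_left (2 * Real.pi * I * p))).mul_left
      (jacobiFactor p q μ)
  rw [thetaQ, ← tsum_mul_left, ← hsum.tsum_eq]
  refine tsum_congr fun m ↦ ?_
  rw [cexp_eq_jacobiFactor_mul_jacobiTheta₂_term, jacobiTheta₂'_term]
  ring

lemma jacobiFactor_inv_mul_cexp (p q : ℂ) {μ : ℂ} (hμ : μ ≠ 0) :
    jacobiFactor p q μ⁻¹ * cexp (-Real.pi * (q + I * p * μ⁻¹) ^ 2 * μ) =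
      cexp (2 * Real.pi * I * p * q) * jacobiFactor (-q) p μ := by
  rw [jacobiFactor, jacobiFactor, ← Complex.exp_add, ← Complex.exp_add]
  congr 1
  field_simp
  linear_combination (-p ^ 2) * I_sq

lemma div_I_mul_inv (w μ : ℂ) : w / (I * μ⁻¹) = -I * w * μ := by
  rw [div_eq_mul_inv, mul_inv, inv_I, inv_inv]
  ring

lemma one_div_cpow_neg_I_mul_I_mul_inv {μ : ℂ} (hμ : 0 < μ.re) (s : ℂ) :
    1 / (-I * (I * μ⁻¹)) ^ s = μ ^ s := by
  rw [← mul_assoc, neg_mul, I_mul_I, neg_neg, one_mul,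
    inv_cpow _ _ (slitPlane_arg_ne_pi (.inl hμ)), one_div, inv_inv]

lemma jacobiTheta₂_I_mul_inv (z : ℂ) {μ : ℂ} (hμ : 0 < μ.re) :
    jacobiTheta₂ z (I * μ⁻¹) = μ ^ (1 / 2 : ℂ) * cexp (-Real.pi * z ^ 2 * μ) *
      jacobiTheta₂ (-I * z * μ) (I * μ) := by
  rw [jacobiTheta₂_functional_equation, one_div_cpow_neg_I_mul_I_mul_inv hμ]
  simp only [div_I_mul_inv]
  congr 3
  · linear_combination (Real.pi * z ^ 2 * μ) * I_sq
  · ring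

lemma jacobiTheta₂'_I_mul_inv (z : ℂ) {μ : ℂ} (hμ : 0 < μ.re) :
    jacobiTheta₂' z (I * μ⁻¹) =
      -I * μ * μ ^ (1 / 2 : ℂ) * cexp (-Real.pi * z ^ 2 * μ) *
        (jacobiTheta₂' (-I * z * μ) (I * μ) -
          2 * Real.pi * I * z * jacobiTheta₂ (-I * z * μ) (I * μ)) := by
  rw [jacobiTheta₂'_functional_equation, one_div_cpow_neg_I_mul_I_mul_inv hμ]
  simp only [div_I_mul_inv]
  rw [show -I * (-Real.pi * I * z ^ 2) * μ = -Real.pi * z ^ 2 * μ by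
      linear_combination (Real.pi * z ^ 2 * μ) * I_sq, show -I * -1 * μ = I * μ by ring]
  ring

lemma neg_I_mul_add_I_mul_inv_mul (p q : ℂ) {μ : ℂ} (hμ : μ ≠ 0) :
    -I * (q + I * p * μ⁻¹) * μ = p + I * -q * μ := by
  field_simp
  linear_combination (-p) * I_sq

theorem theta_inv (p q : ℂ) {μ : ℂ} (hμ : 0 < μ.re) :
    theta p q μ⁻¹ = μ ^ (1 / 2 : ℂ) * cexp (2 * Real.pi * I * p * q) * theta (-q) p μ := by
  have hμ0 : μ ≠ 0 := ne_zero_of_re_pos hμ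
  rw [theta_eq_jacobiTheta₂, theta_eq_jacobiTheta₂, jacobiTheta₂_I_mul_inv _ hμ,
    neg_I_mul_add_I_mul_inv_mul p q hμ0]
  linear_combination (μ ^ (1 / 2 : ℂ) * jacobiTheta₂ (p + I * -q * μ) (I * μ)) *
    jacobiFactor_inv_mul_cexp p q hμ0

theorem thetaQ_inv (p q : ℂ) {μ : ℂ} (hμ : 0 < μ.re) :
    thetaQ p q μ⁻¹ =
      -I * μ * μ ^ (1 / 2 : ℂ) * cexp (2 * Real.pi * I * p * q) * thetaQ (-q) p μ := by
  have hμ0 : μ ≠ 0 := ne_zero_of_re_pos hμ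
  rw [thetaQ_eq_jacobiTheta₂' _ _ (re_inv_pos hμ), thetaQ_eq_jacobiTheta₂' _ _ hμ,
    jacobiTheta₂'_I_mul_inv _ hμ, jacobiTheta₂_I_mul_inv _ hμ,
    neg_I_mul_add_I_mul_inv_mul p q hμ0]
  set θ := jacobiTheta₂ (p + I * -q * μ) (I * μ)
  set θ' := jacobiTheta₂' (p + I * -q * μ) (I * μ)
  set s := μ ^ (1 / 2 : ℂ)
  have bracket_eq : -I * μ * (θ' - 2 * Real.pi * I * (q + I * p * μ⁻¹) * θ) +
      2 * Real.pi * I * p * θ = -I * μ * (θ' + 2 * Real.pi * I * -q * θ) := by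
    field_simp
    linear_combination (2 * Real.pi * p * θ) * I_sq
  linear_combination (s * jacobiFactor p q μ⁻¹ *
      cexp (-Real.pi * (q + I * p * μ⁻¹) ^ 2 * μ)) * bracket_eq +
    (s * (-I * μ) * (θ' + 2 * Real.pi * I * -q * θ)) * jacobiFactor_inv_mul_cexp p q hμ0

theorem w3_inv (p q : ℂ) {μ : ℂ} (hμ : 0 < μ.re) : w3 p q μ⁻¹ = -μ ^ 2 * w1 (-q) p μ := by
  have hμ0 : μ ≠ 0 := ne_zero_of_re_pos hμ
  have sqrt_sq : (μ ^ (1 / 2 : ℂ)) ^ 2 = μ := by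
    rw [one_div]
    exact cpow_ofNat_inv_pow μ 2
  have exp_half_shift : cexp (2 * Real.pi * I * (p + 1 / 2) * q) =
      cexp (2 * Real.pi * I * p * q) * cexp (Real.pi * I * q) := by
    rw [← Complex.exp_add]
    ring_nf
  rw [w3, w1, theta_inv _ _ hμ, theta_inv _ _ hμ, theta_inv _ _ hμ, thetaQ_inv _ _ hμ,
    exp_half_shift, mul_neg, Complex.exp_neg]
  simp only [neg_zero, mul_zero, Complex.exp_zero, mul_one]
  rcases eq_or_ne (theta (-q) p μ) 0 with hθ | hθ
  · simp [hθ]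
  · field_simp
    linear_combination
      theta 0 (1 / 2) μ * theta 0 0 μ * thetaQ (-q) ((2 * p + 1) / 2) μ * sqrt_sq

end ThetaInversion

section Analyticity

open Complex

lemma isOpen_re_pos : IsOpen {μ : ℂ | 0 < μ.re} := isOpen_lt continuous_const continuous_re

lemma differentiableOn_jacobiTheta₂'_comp {z τ : ℂ → ℂ} {U : Set ℂ} (hU : IsOpen U)
    (hz : DifferentiableOn ℂ z U) (hτ : DifferentiableOn ℂ τ U) (him : ∀ w ∈ U, 0 < (τ w).im) :
    DifferentiableOn ℂ (fun w ↦ jacobiTheta₂' (z w) (τ w)) U := by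
  intro w hw
  obtain ⟨T, hT, hTw⟩ := exists_between (him w hw)
  obtain ⟨S, hSw⟩ := exists_gt |(z w).im|
  let V : Set ℂ := U ∩ (fun u ↦ (|(z u).im|, (τ u).im)) ⁻¹' (Set.Iio S ×ˢ Set.Ioi T)
  have hV : IsOpen V :=
    ((continuous_abs.comp continuous_im).comp_continuousOn hz.continuousOn).prodMk
      (continuous_im.comp_continuousOn hτ.continuousOn) |>.isOpen_inter_preimage hU
        (isOpen_Iio.prod isOpen_Ioi)
  have bound_summable : Summable fun n : ℤ ↦
      2 * Real.pi * |n| * Real.exp (-Real.pi * (T * n ^ 2 - 2 * S * |n|)) := by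
    simpa only [pow_one, mul_assoc] using
      (summable_pow_mul_jacobiTheta₂_term_bound S hT 1).mul_left (2 * Real.pi)
  have term_differentiable (n : ℤ) :
      DifferentiableOn ℂ (fun u ↦ jacobiTheta₂'_term n (z u) (τ u)) V := by
    have hzV := hz.mono (Set.inter_subset_left : V ⊆ U)
    have hτV := hτ.mono (Set.inter_subset_left : V ⊆ U)
    unfold jacobiTheta₂'_term jacobiTheta₂_term
    fun_prop
  have term_le (n : ℤ) (u : ℂ) (hu : u ∈ V) := norm_jacobiTheta₂'_term_le hT hu.2.1.le hu.2.2.le n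
  exact ((differentiableOn_tsum_of_summable_norm bound_summable term_differentiable hV
    term_le).differentiableAt (hV.mem_nhds ⟨hw, hSw, hTw⟩)).differentiableWithinAt

lemma differentiableOn_jacobiTheta₂_comp {z τ : ℂ → ℂ} {U : Set ℂ}
    (hz : DifferentiableOn ℂ z U) (hτ : DifferentiableOn ℂ τ U) (him : ∀ w ∈ U, 0 < (τ w).im) :
    DifferentiableOn ℂ (fun w ↦ jacobiTheta₂ (z w) (τ w)) U := fun w hw ↦
  DifferentiableAt.comp_differentiableWithinAt (g := fun v : ℂ × ℂ ↦ jacobiTheta₂ v.1 v.2) w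
    (hasFDerivAt_jacobiTheta₂ (z w) (him w hw)).differentiableAt ((hz w hw).prodMk (hτ w hw))

lemma differentiableOn_jacobiTheta₂_add_mul_I_mul (p q : ℂ) :
    DifferentiableOn ℂ (fun μ ↦ jacobiTheta₂ (q + I * p * μ) (I * μ)) {μ | 0 < μ.re} :=
  differentiableOn_jacobiTheta₂_comp (by fun_prop) (by fun_prop) (by simp)

theorem differentiableOn_theta (p q : ℂ) : DifferentiableOn ℂ (theta p q) {μ | 0 < μ.re} := by
  rw [funext (theta_eq_jacobiTheta₂ p q)]
  unfold jacobiFactor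
  exact .mul (by fun_prop) (differentiableOn_jacobiTheta₂_add_mul_I_mul p q)

theorem differentiableOn_thetaQ (p q : ℂ) : DifferentiableOn ℂ (thetaQ p q) {μ | 0 < μ.re} := by
  refine DifferentiableOn.congr ?_ fun μ hμ ↦ thetaQ_eq_jacobiTheta₂' p q hμ
  unfold jacobiFactor
  refine .mul (by fun_prop)
    (.add ?_ ((differentiableOn_jacobiTheta₂_add_mul_I_mul p q).const_mul _))
  exact differentiableOn_jacobiTheta₂'_comp isOpen_re_pos (by fun_prop) (by fun_prop) (by simp)

lemma analyticAt_theta (p q : ℂ) {μ : ℂ} (hμ : 0 < μ.re) : AnalyticAt ℂ (theta p q) μ :=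
  (differentiableOn_theta p q).analyticAt (isOpen_re_pos.mem_nhds hμ)

lemma analyticAt_thetaQ (p q : ℂ) {μ : ℂ} (hμ : 0 < μ.re) : AnalyticAt ℂ (thetaQ p q) μ :=
  (differentiableOn_thetaQ p q).analyticAt (isOpen_re_pos.mem_nhds hμ)

theorem analyticAt_w1 {p q μ : ℂ} (hμ : 0 < μ.re) (hθ : theta p q μ ≠ 0) :
    AnalyticAt ℂ (w1 p q) μ :=
  (((analyticAt_const.mul (analyticAt_theta 0 0 hμ)).mul (analyticAt_theta 0 (1 / 2) hμ)).mul
    (analyticAt_thetaQ p (q + 1 / 2) hμ)).div (analyticAt_const.mul (analyticAt_theta p q hμ))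
      (mul_ne_zero (exp_ne_zero _) hθ)

end Analyticity

open Finset in
theorem statement8_general {p q μ : ℂ} (hμ : 0 < μ.re) (hθ : theta p q (1 / μ) ≠ 0) (n : ℕ) :
    iteratedDeriv n (w3 p q) (1 / μ) =
      (-1) ^ (n + 1) * ∑ ij ∈ antidiagonal n, inversionCoeff (2 : ℂ) ij.1 ij.2 *
        μ ^ (2 + 2 * ij.1 + ij.2) * iteratedDeriv ij.1 (w1 (-q) p) μ := by
  rw [one_div] at hθ ⊢
  have w3_near : w3 p q =ᶠ[nhds μ⁻¹] -fun ν ↦ ν ^ (-2 : ℤ) • w1 (-q) p ν⁻¹ := by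
    filter_upwards [isOpen_re_pos.mem_nhds (re_inv_pos hμ)] with ν hν
    simpa [zpow_ofNat] using w3_inv p q (re_inv_pos hν)
  have hw1 : ContDiffAt ℂ n (w1 (-q) p) (μ⁻¹)⁻¹ := by
    rw [inv_inv]
    exact (analyticAt_w1 hμ (right_ne_zero_of_mul (theta_inv p q hμ ▸ hθ))).contDiffAt
  rw [w3_near.iteratedDeriv_eq, iteratedDeriv_neg,
    iteratedDeriv_zpow_neg_smul_comp_inv 2 (inv_ne_zero (Complex.ne_zero_of_re_pos hμ)) hw1]
  simp only [inv_inv, inv_zpow', neg_neg, smul_eq_mul, pow_succ, mul_neg_one, neg_mul, mul_assoc]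
  norm_cast

/-- Lemma 5.8: behavior of `w₃[p,q]` and its μ-derivatives up to order 4 under
`iμ ↦ i/μ`, expressed through `w₁[−q,p]`. -/
theorem statement8 (p q μ : ℂ) (hμ : 0 < μ.re)
    (hθ : ∀ ν : ℂ, 0 < ν.re → theta p q ν ≠ 0) :
    w3 p q (1 / μ) = -μ ^ 2 * w1 (-q) p μ ∧
    iteratedDeriv 1 (w3 p q) (1 / μ) =
        μ ^ 4 * iteratedDeriv 1 (w1 (-q) p) μ + 2 * μ ^ 3 * w1 (-q) p μ ∧
    iteratedDeriv 2 (w3 p q) (1 / μ) =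
        -μ ^ 6 * iteratedDeriv 2 (w1 (-q) p) μ - 6 * μ ^ 5 * iteratedDeriv 1 (w1 (-q) p) μ -
          6 * μ ^ 4 * w1 (-q) p μ ∧
    iteratedDeriv 3 (w3 p q) (1 / μ) =
        μ ^ 8 * iteratedDeriv 3 (w1 (-q) p) μ + 12 * μ ^ 7 * iteratedDeriv 2 (w1 (-q) p) μ +
          36 * μ ^ 6 * iteratedDeriv 1 (w1 (-q) p) μ + 24 * μ ^ 5 * w1 (-q) p μ ∧
    iteratedDeriv 4 (w3 p q) (1 / μ) =
        -μ ^ 10 * iteratedDeriv 4 (w1 (-q) p) μ - 20 * μ ^ 9 * iteratedDeriv 3 (w1 (-q) p) μ -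
          120 * μ ^ 8 * iteratedDeriv 2 (w1 (-q) p) μ -
          240 * μ ^ 7 * iteratedDeriv 1 (w1 (-q) p) μ - 120 * μ ^ 6 * w1 (-q) p μ := by
  have w3_iteratedDeriv := statement8_general hμ (hθ (1 / μ) (one_div μ ▸ re_inv_pos hμ))
  refine ⟨?_, ?_, ?_, ?_, ?_⟩
  · rw [one_div, w3_inv p q hμ]
  all_goals
    rw [w3_iteratedDeriv]
    simp only [Finset.Nat.sum_antidiagonal_eq_sum_range_succ_mk, Finset.sum_range_succ,
      Finset.sum_range_zero, Nat.sub_self, inversionCoeff, ascPochhammer_succ_eval,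
      ascPochhammer_zero, Polynomial.eval_one, Nat.choose, iteratedDeriv_zero]
    push_cast
    ring

end
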